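/- Let M ∈ S^m be symmetric with spectral decomposition M = U Diag(d) Uᵀ, where U is orthogonal and d ∈ ℝ^m is the vector of eigenvalues. Let c > 0, let Δ = { x ∈ ℝ^m : x ≥ 0, eᵀx = c } be the scaled simplex, and let d* be the Euclidean projection of d onto Δ. Then R* = U Diag(d*) Uᵀ is a minimizer of ‖R − M‖_F over the set R = { R ∈ S^m : R ⪰ 0, trace(R) = c }, i.e., R* is a projection of M onto R. -/

import Mathlib

open Matrix

/-- The Frobenius norm of a real matrix. -/
noncomputable def frobNorm {p m : ℕ} (A : Matrix (Fin p) (Fin m) ℝ) : ℝ :=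
  Real.sqrt (∑ i, ∑ j, A i j ^ 2)

/-! The Frobenius norm, the trace and positive semidefiniteness are all invariant under unitary
conjugation, so one may assume that `M = Diag(d)`. Passing from `R - Diag(d)` to its diagonal
discards the off-diagonal entries, hence decreases the norm, and the diagonal of a feasible `R` lies
in the scaled simplex: the distance from `R` to `Diag(d)` is at least the distance from `d` to the
simplex, which `Diag(d*)` attains. -/

open WithLp (toLp)

section Frobenius

open scoped Matrix.Norms.Frobenius

variable {l m n 𝕜 : Type*} [Fintype l] [Fintype m] [Fintype n] [RCLike 𝕜]

theorem frobNorm_eq_norm {p q : ℕ} (A : Matrix (Fin p) (Fin q) ℝ) : frobNorm A = ‖A‖ := by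
  simp [frobNorm, frobenius_norm_def, Real.sqrt_eq_rpow]

theorem frobenius_norm_sq_eq_trace (A : Matrix m n 𝕜) :
    ((‖A‖ ^ 2 : ℝ) : 𝕜) = (Aᴴ * A).trace := by
  have norm_sq : ‖A‖ ^ 2 = ∑ i, ∑ j, ‖A i j‖ ^ 2 := by
    rw [frobenius_norm_def, ← Real.sqrt_eq_rpow, Real.sq_sqrt (by positivity)]
    simp only [Real.rpow_two]
  rw [norm_sq, Finset.sum_comm]
  simp [trace, mul_apply, RCLike.conj_mul]

theorem frobenius_norm_isometry_mul [DecidableEq m] {U : Matrix l m 𝕜} (hU : Uᴴ * U = 1)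
    (A : Matrix m n 𝕜) : ‖U * A‖ = ‖A‖ := by
  have trace_eq : ((U * A)ᴴ * (U * A)).trace = (Aᴴ * A).trace := by
    rw [conjTranspose_mul, Matrix.mul_assoc, ← Matrix.mul_assoc Uᴴ, hU, Matrix.one_mul]
  rw [← frobenius_norm_sq_eq_trace, ← frobenius_norm_sq_eq_trace] at trace_eq
  exact (sq_eq_sq₀ (norm_nonneg _) (norm_nonneg _)).1 (RCLike.ofReal_injective trace_eq)

theorem frobenius_norm_isometry_conj [DecidableEq m] {U : Matrix l m 𝕜} (hU : Uᴴ * U = 1)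
    (A : Matrix m m 𝕜) : ‖U * A * Uᴴ‖ = ‖A‖ := by
  rw [Matrix.mul_assoc, frobenius_norm_isometry_mul hU, ← frobenius_norm_conjTranspose,
    conjTranspose_mul, conjTranspose_conjTranspose, frobenius_norm_isometry_mul hU,
    frobenius_norm_conjTranspose]

theorem norm_toLp_diag_le_frobenius_norm {α : Type*} [SeminormedAddCommGroup α]
    (A : Matrix n n α) : ‖toLp 2 A.diag‖ ≤ ‖A‖ := by
  rw [PiLp.norm_eq_of_L2, frobenius_norm_def, ← Real.sqrt_eq_rpow]
  simp only [Real.rpow_two]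
  gcongr with i
  exact Finset.single_le_sum (f := fun j => ‖A i j‖ ^ 2) (fun _ _ => sq_nonneg _)
    (Finset.mem_univ i)

theorem isMinOn_norm_toLp_sub_iff {C : Set (n → ℝ)} {d x : n → ℝ} :
    IsMinOn (fun z => ‖toLp 2 (z - d)‖) C x ↔
      ∀ z ∈ C, ∑ i, (d i - x i) ^ 2 ≤ ∑ i, (d i - z i) ^ 2 := by
  have norm_eq (z : n → ℝ) : ‖toLp 2 (z - d)‖ = √(∑ i, (d i - z i) ^ 2) := by
    simp [PiLp.norm_eq_of_L2, sub_sq_comm]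
  simp only [isMinOn_iff, norm_eq, Real.sqrt_le_sqrt_iff (Finset.sum_nonneg fun _ _ => sq_nonneg _)]

theorem isMinOn_norm_sub_diagonal [DecidableEq n] {α : Type*} [SeminormedAddCommGroup α]
    {K : Set (Matrix n n α)} {C : Set (n → α)} {d x : n → α} (hKC : Set.MapsTo diag K C)
    (hx : IsMinOn (fun z => ‖toLp 2 (z - d)‖) C x) :
    IsMinOn (fun R => ‖R - diagonal d‖) K (diagonal x) := by
  refine isMinOn_iff.2 fun R hR => ?_
  calc ‖diagonal x - diagonal d‖ = ‖toLp 2 (x - d)‖ := by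
        rw [diagonal_sub, frobenius_norm_diagonal]; rfl
    _ ≤ ‖toLp 2 (R.diag - d)‖ := isMinOn_iff.1 hx _ (hKC hR)
    _ = ‖toLp 2 (R - diagonal d).diag‖ := by rw [diag_sub, diag_diagonal]
    _ ≤ ‖R - diagonal d‖ := norm_toLp_diag_le_frobenius_norm _

theorem isMinOn_norm_sub_unitary_conj [DecidableEq n] {U : Matrix n n 𝕜}
    (hU : U ∈ unitaryGroup n 𝕜) {K : Set (Matrix n n 𝕜)} {D X : Matrix n n 𝕜}
    (hK : Set.MapsTo (fun R => Uᴴ * R * U) K K) (hX : IsMinOn (fun R => ‖R - D‖) K X) :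
    IsMinOn (fun R => ‖R - U * D * Uᴴ‖) K (U * X * Uᴴ) := by
  have hUU : U * Uᴴ = 1 := mem_unitaryGroup_iff.1 hU
  have norm_conj_sub (A : Matrix n n 𝕜) : ‖U * A * Uᴴ - U * D * Uᴴ‖ = ‖A - D‖ := by
    rw [← Matrix.sub_mul, ← Matrix.mul_sub,
      frobenius_norm_isometry_conj (mem_unitaryGroup_iff'.1 hU)]
  refine isMinOn_iff.2 fun R hR => ?_
  have conj_conj : U * (Uᴴ * R * U) * Uᴴ = R := by
    rw [← Matrix.mul_assoc, ← Matrix.mul_assoc, hUU, Matrix.one_mul, Matrix.mul_assoc, hUU,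
      Matrix.mul_one]
  calc ‖U * X * Uᴴ - U * D * Uᴴ‖ = ‖X - D‖ := norm_conj_sub X
    _ ≤ ‖Uᴴ * R * U - D‖ := isMinOn_iff.1 hX _ (hK hR)
    _ = ‖R - U * D * Uᴴ‖ := by rw [← norm_conj_sub, conj_conj]

end Frobenius

section Feasible

variable {n α : Type*} [Fintype n]

variable (n) in
/-- The scaled simplex `Δ = {x ≥ 0 : eᵀx = c}`. Over `ℂ`, with the order of `ComplexOrder`,
its points have real coordinates. -/
def scaledSimplex [AddCommMonoid α] [PartialOrder α] (c : α) : Set (n → α) :=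
  {x | 0 ≤ x ∧ ∑ i, x i = c}

variable (n) in
/-- The feasible set `{A ⪰ 0 : trace A = c}`, the matrix analogue of the scaled simplex;
for `c = 1` it is known as the spectraplex. -/
def scaledSpectraplex [Ring α] [PartialOrder α] [StarRing α] (c : α) : Set (Matrix n n α) :=
  {A | A.PosSemidef ∧ A.trace = c}

theorem mapsTo_diag_scaledSpectraplex [Ring α] [PartialOrder α] [StarRing α] (c : α) :
    Set.MapsTo diag (scaledSpectraplex n c) (scaledSimplex n c) :=
  fun _ ⟨hA, htr⟩ => ⟨fun _ => hA.diag_nonneg, htr⟩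

theorem diagonal_mem_scaledSpectraplex [DecidableEq n] [Ring α] [PartialOrder α] [StarRing α]
    [StarOrderedRing α] {c : α} {x : n → α} (hx : x ∈ scaledSimplex n c) :
    diagonal x ∈ scaledSpectraplex n c :=
  ⟨.diagonal hx.1, (trace_diagonal x).trans hx.2⟩

theorem unitary_conj_mem_scaledSpectraplex [DecidableEq n] [CommRing α] [PartialOrder α]
    [StarRing α] {c : α} {U A : Matrix n n α} (hU : U ∈ unitaryGroup n α)
    (hA : A ∈ scaledSpectraplex n c) : U * A * Uᴴ ∈ scaledSpectraplex n c := by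
  refine ⟨hA.1.mul_mul_conjTranspose_same U, ?_⟩
  rw [trace_mul_cycle, ← star_eq_conjTranspose, mem_unitaryGroup_iff'.1 hU, Matrix.one_mul, hA.2]

end Feasible

open scoped Matrix.Norms.Frobenius ComplexOrder in
theorem spectral_projection_onto_trace_constrained_psd_general {n 𝕜 : Type*} [Fintype n]
    [DecidableEq n] [RCLike 𝕜] {c : 𝕜} {U : Matrix n n 𝕜} (hU : U ∈ unitaryGroup n 𝕜)
    {d dstar : n → 𝕜} (hmem : dstar ∈ scaledSimplex n c)
    (hproj : IsMinOn (fun z => ‖toLp 2 (z - d)‖) (scaledSimplex n c) dstar) :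
    U * diagonal dstar * Uᴴ ∈ scaledSpectraplex n c ∧
      IsMinOn (fun R => ‖R - U * diagonal d * Uᴴ‖) (scaledSpectraplex n c)
        (U * diagonal dstar * Uᴴ) := by
  have conj_mapsTo : Set.MapsTo (fun R => Uᴴ * R * U) (scaledSpectraplex n c)
      (scaledSpectraplex n c) := fun R hR => by
    simpa [star_eq_conjTranspose] using
      unitary_conj_mem_scaledSpectraplex (Unitary.star_mem hU) hR
  exact ⟨unitary_conj_mem_scaledSpectraplex hU (diagonal_mem_scaledSpectraplex hmem),
    isMinOn_norm_sub_unitary_conj hU conj_mapsTo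
      (isMinOn_norm_sub_diagonal (mapsTo_diag_scaledSpectraplex c) hproj)⟩

/-- spectral formula for the projection onto the set
`{R ⪰ 0 : trace R = c}`: if `M = U Diag(d) Uᵀ` with `U` orthogonal and `d*` is the
Euclidean projection of `d` onto the scaled simplex `Δ = {x ≥ 0 : eᵀx = c}`, then
`R* = U Diag(d*) Uᵀ` minimizes `‖R − M‖_F` over that set. -/
theorem spectral_projection_onto_trace_constrained_psd
    (m : ℕ) (c : ℝ) (hc : 0 < c)
    (M U : Matrix (Fin m) (Fin m) ℝ) (d : Fin m → ℝ)
    (hU : Uᵀ * U = 1) (hUU : U * Uᵀ = 1)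
    (hM : M = U * Matrix.diagonal d * Uᵀ)
    (dstar : Fin m → ℝ)
    (hdstar_mem : (∀ i, 0 ≤ dstar i) ∧ ∑ i, dstar i = c)
    (hdstar_proj : ∀ z : Fin m → ℝ, (∀ i, 0 ≤ z i) → ∑ i, z i = c →
      ∑ i, (d i - dstar i) ^ 2 ≤ ∑ i, (d i - z i) ^ 2) :
    (U * Matrix.diagonal dstar * Uᵀ).PosSemidef ∧
      (U * Matrix.diagonal dstar * Uᵀ).trace = c ∧
      ∀ R : Matrix (Fin m) (Fin m) ℝ, R.PosSemidef → R.trace = c →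
        frobNorm (U * Matrix.diagonal dstar * Uᵀ - M) ≤ frobNorm (R - M) := by
  obtain ⟨⟨hpsd, htr⟩, hmin⟩ := spectral_projection_onto_trace_constrained_psd_general
    (mem_unitaryGroup_iff.2 hUU) hdstar_mem
    (isMinOn_norm_toLp_sub_iff.2 fun z hz => hdstar_proj z hz.1 hz.2)
  exact ⟨hpsd, htr, fun R hR hRc => by
    simpa only [hM, frobNorm_eq_norm, conjTranspose_eq_transpose_of_trivial] using
      isMinOn_iff.1 hmin R ⟨hR, hRc⟩⟩
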